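/- arXiv:1310.1688 — 6 statements merged into one kernel-verified Lean document; each statement's English description precedes it below -/
import Mathlib

section
/- Let γ : ℝ × ℝ → ℝ², (s,t) ↦ γ(s,t), be a smooth map, 2π-periodic in s, such that for every t the curve s ↦ γ(s,t) is equicentroaffine, i.e. det(γ, γ_s) = 1, and let κ : ℝ × ℝ → ℝ be its equicentroaffine curvature, defined by γ_ss = -κ γ. Suppose the motion vector field has the form γ_t = -(1/2) α_s γ + α γ_s for a smooth function α : ℝ × ℝ → ℝ, 2π-periodic in s. Then the equicentroaffine curvature evolves by κ_t = (1/2) α_sss + 2 κ α_s + κ_s α. -/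
/-- Partial derivative in the first (space) variable. -/
noncomputable def pderivS {E : Type*} [NormedAddCommGroup E] [NormedSpace ℝ E]
    (f : ℝ → ℝ → E) (s t : ℝ) : E := deriv (fun u => f u t) s

/-- Partial derivative in the second (time) variable. -/
noncomputable def pderivT {E : Type*} [NormedAddCommGroup E] [NormedSpace ℝ E]
    (f : ℝ → ℝ → E) (s t : ℝ) : E := deriv (fun u => f s u) t

/-!
The identity `(γ_ss)_t = (γ_t)_ss` compares two expansions in the moving frame `γ, γ_s`. For a
motion `γ_t = β γ + α γ_s`, differentiating `γ_ss = -κ γ` in `t` gives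
`(-κ_t - κ β) γ - κ α γ_s`, while differentiating `γ_t` twice in `s` gives the coefficient
`β_ss - 2 κ α_s - κ_s α - κ β` of `γ`. Equating the coefficients of `γ` yields
`κ_t = -β_ss + 2 κ α_s + κ_s α`, and the theorem is the case `β = -α_s / 2`.
-/

open Function

theorem linearIndependent_pair_of_det_ne_zero {R : Type*} [CommRing R] [NoZeroDivisors R]
    {v w : R × R} (h : v.1 * w.2 - v.2 * w.1 ≠ 0) : LinearIndependent R ![v, w] := by
  rw [LinearIndependent.pair_iff]
  intro a b hab
  have hfst : a * v.1 + b * w.1 = 0 := congrArg Prod.fst hab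
  have hsnd : a * v.2 + b * w.2 = 0 := congrArg Prod.snd hab
  constructor
  · refine (mul_eq_zero.mp ?_).resolve_right h
    linear_combination w.2 * hfst - w.1 * hsnd
  · refine (mul_eq_zero.mp ?_).resolve_right h
    linear_combination v.1 * hsnd - v.2 * hfst

section MovingFrame

variable {𝕜 E F : Type*} [NontriviallyNormedField 𝕜]
  [NormedAddCommGroup E] [NormedSpace 𝕜 E] [NormedAddCommGroup F] [NormedSpace 𝕜 F]

theorem differentiableAt_of_smul_of_ne_zero [SeparatingDual 𝕜 F] {c : E → 𝕜} {w : E → F} {x : E}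
    (hcw : DifferentiableAt 𝕜 (fun y ↦ c y • w y) x) (hw : DifferentiableAt 𝕜 w x)
    (hx : w x ≠ 0) : DifferentiableAt 𝕜 c x := by
  obtain ⟨φ, hφ⟩ := SeparatingDual.exists_ne_zero (R := 𝕜) hx
  have hφw : DifferentiableAt 𝕜 (fun y ↦ φ (w y)) x := φ.differentiableAt.comp x hw
  have hφcw : DifferentiableAt 𝕜 (fun y ↦ φ (c y • w y)) x := φ.differentiableAt.comp x hcw
  refine (hφcw.fun_mul (hφw.fun_inv hφ)).congr_of_eventuallyEq ?_
  filter_upwards [hφw.continuousAt.eventually_ne hφ] with y hy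
  rw [map_smul, smul_eq_mul, mul_inv_cancel_right₀ hy]

theorem hasDerivAt_smul_add_smul_velocity {c v : 𝕜 → E} {a b : 𝕜 → 𝕜} {a' b' k x : 𝕜}
    (hc : HasDerivAt c (v x) x) (hv : HasDerivAt v (-k • c x) x)
    (ha : HasDerivAt a a' x) (hb : HasDerivAt b b' x) :
    HasDerivAt (fun y ↦ a y • c y + b y • v y)
      ((a' - k * b x) • c x + (a x + b') • v x) x := by
  convert (ha.fun_smul hc).fun_add (hb.fun_smul hv) using 1
  module

end MovingFrame

section PartialDerivatives

variable {E : Type*} [NormedAddCommGroup E] [NormedSpace ℝ E] {f : ℝ → ℝ → E} {s t : ℝ}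

theorem hasDerivAt_fst_of_differentiableAt_uncurry (hf : DifferentiableAt ℝ (uncurry f) (s, t)) :
    HasDerivAt (fun u ↦ f u t) (fderiv ℝ (uncurry f) (s, t) (1, 0)) s :=
  HasFDerivAt.comp_hasDerivAt (l := uncurry f) s hf.hasFDerivAt
    ((hasDerivAt_id s).prodMk (hasDerivAt_const s t))

theorem hasDerivAt_snd_of_differentiableAt_uncurry (hf : DifferentiableAt ℝ (uncurry f) (s, t)) :
    HasDerivAt (fun u ↦ f s u) (fderiv ℝ (uncurry f) (s, t) (0, 1)) t :=
  HasFDerivAt.comp_hasDerivAt (l := uncurry f) t hf.hasFDerivAt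
    ((hasDerivAt_const t s).prodMk (hasDerivAt_id t))

theorem pderivS_eq_fderiv (hf : DifferentiableAt ℝ (uncurry f) (s, t)) :
    pderivS f s t = fderiv ℝ (uncurry f) (s, t) (1, 0) :=
  (hasDerivAt_fst_of_differentiableAt_uncurry hf).deriv

theorem pderivT_eq_fderiv (hf : DifferentiableAt ℝ (uncurry f) (s, t)) :
    pderivT f s t = fderiv ℝ (uncurry f) (s, t) (0, 1) :=
  (hasDerivAt_snd_of_differentiableAt_uncurry hf).deriv

theorem hasDerivAt_pderivS (hf : DifferentiableAt ℝ (uncurry f) (s, t)) :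
    HasDerivAt (fun u ↦ f u t) (pderivS f s t) s :=
  (hasDerivAt_fst_of_differentiableAt_uncurry hf).differentiableAt.hasDerivAt

theorem hasDerivAt_pderivT (hf : DifferentiableAt ℝ (uncurry f) (s, t)) :
    HasDerivAt (fun u ↦ f s u) (pderivT f s t) t :=
  (hasDerivAt_snd_of_differentiableAt_uncurry hf).differentiableAt.hasDerivAt

theorem pderivS_const_mul (c : ℝ) (g : ℝ → ℝ → ℝ) :
    pderivS (fun s t ↦ c * g s t) = fun s t ↦ c * pderivS g s t :=
  funext₂ fun _ _ ↦ deriv_const_mul_field c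

theorem contDiff_pderivS {m n : WithTop ℕ∞} (hf : ContDiff ℝ n (uncurry f)) (hmn : m + 1 ≤ n) :
    ContDiff ℝ m (uncurry (pderivS f)) := by
  have hdiff : Differentiable ℝ (uncurry f) :=
    hf.differentiable (ENat.one_le_iff_ne_zero_withTop.mp (le_add_self.trans hmn))
  have hpderivS : uncurry (pderivS f) = fun p ↦ fderiv ℝ (uncurry f) p (1, 0) :=
    funext fun p ↦ pderivS_eq_fderiv (hdiff p)
  rw [hpderivS]
  exact (hf.fderiv_right hmn).clm_apply contDiff_const

theorem pderivT_pderivS_comm (hf : ContDiff ℝ 2 (uncurry f)) :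
    pderivT (pderivS f) = pderivS (pderivT f) := by
  have hdiff : Differentiable ℝ (uncurry f) := hf.differentiable two_ne_zero
  have hfderiv : Differentiable ℝ (fderiv ℝ (uncurry f)) :=
    (hf.fderiv_right (m := 1) one_add_one_eq_two.le).differentiable_one
  have happly (v w p : ℝ × ℝ) : fderiv ℝ (fun q ↦ fderiv ℝ (uncurry f) q v) p w =
      fderiv ℝ (fderiv ℝ (uncurry f)) p w v := by
    simp [fderiv_clm_apply (hfderiv p) (differentiableAt_const v)]
  have hS : pderivS f = fun s t ↦ fderiv ℝ (uncurry f) (s, t) (1, 0) :=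
    funext₂ fun _ _ ↦ pderivS_eq_fderiv (hdiff _)
  have hT : pderivT f = fun s t ↦ fderiv ℝ (uncurry f) (s, t) (0, 1) :=
    funext₂ fun _ _ ↦ pderivT_eq_fderiv (hdiff _)
  funext s t
  have hsymm : IsSymmSndFDerivAt ℝ (uncurry f) (s, t) :=
    hf.contDiffAt.isSymmSndFDerivAt minSmoothness_of_isRCLikeNormedField.le
  calc pderivT (pderivS f) s t
      = fderiv ℝ (fderiv ℝ (uncurry f)) (s, t) (0, 1) (1, 0) := by
        rw [hS, pderivT_eq_fderiv (hfderiv.clm_apply (differentiable_const _) _)]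
        exact happly _ _ _
    _ = fderiv ℝ (fderiv ℝ (uncurry f)) (s, t) (1, 0) (0, 1) := hsymm.eq _ _
    _ = pderivS (pderivT f) s t := by
        rw [hT, pderivS_eq_fderiv (hfderiv.clm_apply (differentiable_const _) _)]
        exact (happly _ _ _).symm

end PartialDerivatives

section CurvatureEvolution

variable {E : Type*} [NormedAddCommGroup E] [NormedSpace ℝ E]
  {γ : ℝ → ℝ → E} {κ α β : ℝ → ℝ → ℝ} {s t : ℝ}

theorem differentiableAt_curvature (hγ : ContDiff ℝ 3 (uncurry γ))
    (hκ : ∀ s t, pderivS (pderivS γ) s t = (-κ s t) • γ s t) (hne : γ s t ≠ 0) :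
    DifferentiableAt ℝ (uncurry κ) (s, t) := by
  have hγss : Differentiable ℝ (uncurry (pderivS (pderivS γ))) :=
    (contDiff_pderivS (contDiff_pderivS hγ two_add_one_eq_three.le)
      one_add_one_eq_two.le).differentiable_one
  have hκγ : uncurry (pderivS (pderivS γ)) = fun p ↦ (-uncurry κ p) • uncurry γ p :=
    funext fun p ↦ hκ p.1 p.2
  have hneg : DifferentiableAt ℝ (fun p ↦ -uncurry κ p) (s, t) :=
    differentiableAt_of_smul_of_ne_zero (hκγ ▸ hγss (s, t))
      (hγ.differentiable three_ne_zero (s, t)) hne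
  exact differentiableAt_fun_neg_iff.mp hneg

theorem pderivT_pderivS_of_motion (hγ : ContDiff ℝ 2 (uncurry γ))
    (hα : Differentiable ℝ (uncurry α)) (hβ : Differentiable ℝ (uncurry β))
    (hκ : ∀ s t, pderivS (pderivS γ) s t = (-κ s t) • γ s t)
    (hmotion : ∀ s t, pderivT γ s t = β s t • γ s t + α s t • pderivS γ s t) (s t : ℝ) :
    pderivT (pderivS γ) s t =
      (pderivS β s t - κ s t * α s t) • γ s t + (β s t + pderivS α s t) • pderivS γ s t := by
  have hγs : HasDerivAt (fun u ↦ γ u t) (pderivS γ s t) s :=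
    hasDerivAt_pderivS (hγ.differentiable two_ne_zero _)
  have hγss : HasDerivAt (fun u ↦ pderivS γ u t) (-κ s t • γ s t) s :=
    hκ s t ▸ hasDerivAt_pderivS
      ((contDiff_pderivS hγ one_add_one_eq_two.le).differentiable_one _)
  rw [pderivT_pderivS_comm hγ, funext₂ hmotion]
  exact (hasDerivAt_smul_add_smul_velocity (v := fun u ↦ pderivS γ u t) hγs hγss
    (hasDerivAt_pderivS (hβ _)) (hasDerivAt_pderivS (hα _))).deriv

theorem pderivT_pderivS_pderivS_of_motion (hγ : ContDiff ℝ 3 (uncurry γ))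
    (hα : ContDiff ℝ 2 (uncurry α)) (hβ : ContDiff ℝ 2 (uncurry β))
    (hκ : ∀ s t, pderivS (pderivS γ) s t = (-κ s t) • γ s t)
    (hmotion : ∀ s t, pderivT γ s t = β s t • γ s t + α s t • pderivS γ s t)
    (hκd : DifferentiableAt ℝ (uncurry κ) (s, t)) :
    pderivT (pderivS (pderivS γ)) s t =
      (pderivS (pderivS β) s t - 2 * κ s t * pderivS α s t - pderivS κ s t * α s t
          - κ s t * β s t) • γ s t
        + (2 * pderivS β s t + pderivS (pderivS α) s t - κ s t * α s t) • pderivS γ s t := by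
  have hγ₂ : ContDiff ℝ 2 (uncurry γ) := hγ.of_le (by norm_num)
  have hγs : ContDiff ℝ 2 (uncurry (pderivS γ)) := contDiff_pderivS hγ two_add_one_eq_three.le
  have hαd : Differentiable ℝ (uncurry α) := hα.differentiable two_ne_zero
  have hβd : Differentiable ℝ (uncurry β) := hβ.differentiable two_ne_zero
  have hαs : Differentiable ℝ (uncurry (pderivS α)) :=
    (contDiff_pderivS hα one_add_one_eq_two.le).differentiable_one
  have hβs : Differentiable ℝ (uncurry (pderivS β)) :=
    (contDiff_pderivS hβ one_add_one_eq_two.le).differentiable_one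
  have hcoeffγ : HasDerivAt (fun u ↦ pderivS β u t - κ u t * α u t)
      (pderivS (pderivS β) s t - (pderivS κ s t * α s t + κ s t * pderivS α s t)) s :=
    (hasDerivAt_pderivS (hβs _)).fun_sub
      ((hasDerivAt_pderivS hκd).fun_mul (hasDerivAt_pderivS (hαd _)))
  have hcoeffγs : HasDerivAt (fun u ↦ β u t + pderivS α u t)
      (pderivS β s t + pderivS (pderivS α) s t) s :=
    (hasDerivAt_pderivS (hβd _)).fun_add (hasDerivAt_pderivS (hαs _))
  have hγss : HasDerivAt (fun u ↦ pderivS γ u t) (-κ s t • γ s t) s :=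
    hκ s t ▸ hasDerivAt_pderivS (hγs.differentiable two_ne_zero _)
  rw [pderivT_pderivS_comm hγs, funext₂ (pderivT_pderivS_of_motion hγ₂ hαd hβd hκ hmotion)]
  refine (hasDerivAt_smul_add_smul_velocity (v := fun u ↦ pderivS γ u t)
    (hasDerivAt_pderivS (hγ₂.differentiable two_ne_zero _)) hγss hcoeffγ hcoeffγs).deriv.trans ?_
  module

theorem pderivT_curvature_of_motion (hγ : ContDiff ℝ 3 (uncurry γ))
    (hα : ContDiff ℝ 2 (uncurry α)) (hβ : ContDiff ℝ 2 (uncurry β))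
    (hframe : LinearIndependent ℝ ![γ s t, pderivS γ s t])
    (hκ : ∀ s t, pderivS (pderivS γ) s t = (-κ s t) • γ s t)
    (hmotion : ∀ s t, pderivT γ s t = β s t • γ s t + α s t • pderivS γ s t) :
    pderivT κ s t =
      -pderivS (pderivS β) s t + 2 * κ s t * pderivS α s t + pderivS κ s t * α s t := by
  have hκd : DifferentiableAt ℝ (uncurry κ) (s, t) :=
    differentiableAt_curvature hγ hκ (hframe.ne_zero 0)
  have hγd : DifferentiableAt ℝ (uncurry γ) (s, t) := hγ.differentiable three_ne_zero _
  have hκγ : pderivT (pderivS (pderivS γ)) s t =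
      (-pderivT κ s t - κ s t * β s t) • γ s t + (-(κ s t * α s t)) • pderivS γ s t := by
    rw [funext₂ hκ]
    refine ((hasDerivAt_pderivT hκd).fun_neg.fun_smul (hasDerivAt_pderivT hγd)).deriv.trans ?_
    rw [hmotion]
    module
  have hcoeff := (hframe.eq_of_pair
    (hκγ.symm.trans (pderivT_pderivS_pderivS_of_motion hγ hα hβ hκ hmotion hκd))).1
  linear_combination -hcoeff

theorem equicentroaffine_curvature_evolution_general (hγ : ContDiff ℝ 3 (uncurry γ))
    (hα : ContDiff ℝ 3 (uncurry α)) (hframe : LinearIndependent ℝ ![γ s t, pderivS γ s t])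
    (hκ : ∀ s t, pderivS (pderivS γ) s t = (-κ s t) • γ s t)
    (hmotion : ∀ s t, pderivT γ s t =
      (-(1 / 2) * pderivS α s t) • γ s t + α s t • pderivS γ s t) :
    pderivT κ s t =
      (1 / 2) * pderivS (pderivS (pderivS α)) s t
        + 2 * κ s t * pderivS α s t + pderivS κ s t * α s t := by
  have hαs : ContDiff ℝ 2 (uncurry (pderivS α)) := contDiff_pderivS hα two_add_one_eq_three.le
  rw [pderivT_curvature_of_motion hγ (hα.of_le (by norm_num)) (contDiff_const.mul hαs)
    hframe hκ hmotion]
  simp only [pderivS_const_mul]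
  ring

end CurvatureEvolution

/-- under a motion `γ_t = -(1/2) α_s γ + α γ_s` of closed equicentroaffine
plane curves, the equicentroaffine curvature evolves by
`κ_t = (1/2) α_sss + 2 κ α_s + κ_s α`. -/
theorem equicentroaffine_curvature_evolution
    (γ : ℝ → ℝ → ℝ × ℝ) (κ α : ℝ → ℝ → ℝ)
    (hγ : ContDiff ℝ (⊤ : ℕ∞) (fun p : ℝ × ℝ => γ p.1 p.2))
    (hα : ContDiff ℝ (⊤ : ℕ∞) (fun p : ℝ × ℝ => α p.1 p.2))
    (hγper : ∀ s t, γ (s + 2 * Real.pi) t = γ s t)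
    (hαper : ∀ s t, α (s + 2 * Real.pi) t = α s t)
    (hdet : ∀ s t, (γ s t).1 * (pderivS γ s t).2 - (γ s t).2 * (pderivS γ s t).1 = 1)
    (hκ : ∀ s t, pderivS (pderivS γ) s t = (-κ s t) • γ s t)
    (hmotion : ∀ s t, pderivT γ s t =
      (-(1 / 2) * pderivS α s t) • γ s t + α s t • pderivS γ s t) :
    ∀ s t, pderivT κ s t =
      (1 / 2) * pderivS (pderivS (pderivS α)) s t
        + 2 * κ s t * pderivS α s t + pderivS κ s t * α s t :=
  fun s t ↦ equicentroaffine_curvature_evolution_general (hγ.of_le (by norm_cast))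
    (hα.of_le (by norm_cast)) (linearIndependent_pair_of_det_ne_zero (hdet s t ▸ one_ne_zero))
    hκ hmotion
end

section
/- Let γ : ℝ → ℝ² be a smooth 2π-periodic curve with det(γ, γ_s) = 1, and let α, β : ℝ → ℝ be smooth 2π-periodic functions. Set X = -(1/2) α_s γ + α γ_s and Y = -(1/2) β_s γ + β γ_s. Then ∫₀^{2π} det(X, Y) ds = ∫₀^{2π} α β_s ds. -/
/-!
In the moving frame `(γ, γ_s)`, which has determinant one, the determinant of two tangent vectors is
the half-Wronskian `(α β_s - α_s β) / 2` of their coefficients. This differs from `α β_s` by the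
exact derivative `-(α β)_s / 2`, whose integral over a period vanishes.
-/

open MeasureTheory Set

lemma isAlt_smul_add_smul {R M : Type*} [CommRing R] [AddCommGroup M] [Module R M]
    {ω : M →ₗ[R] M →ₗ[R] R} (hω : ω.IsAlt) (x y : M) (a b c d : R) :
    ω (a • x + b • y) (c • x + d • y) = (a * d - b * c) * ω x y := by
  simp only [map_add, map_smul, LinearMap.add_apply, LinearMap.smul_apply, smul_eq_mul,
    hω.self_eq_zero, ← hω.neg x y]
  ring

lemma integral_half_wronskian {a b : ℝ} {u v u' v' : ℝ → ℝ}
    (hu : ∀ s ∈ uIcc a b, HasDerivAt u (u' s) s) (hv : ∀ s ∈ uIcc a b, HasDerivAt v (v' s) s)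
    (hu' : IntervalIntegrable u' volume a b) (hv' : IntervalIntegrable v' volume a b)
    (hab : u b * v b = u a * v a) :
    ∫ s in a..b, 1 / 2 * (u s * v' s - u' s * v s) = ∫ s in a..b, u s * v' s := by
  have huv' : IntervalIntegrable (fun s ↦ u s * v' s) volume a b :=
    hv'.continuousOn_mul (HasDerivAt.continuousOn hu)
  have hu'v : IntervalIntegrable (fun s ↦ u' s * v s) volume a b :=
    hu'.mul_continuousOn (HasDerivAt.continuousOn hv)
  have by_parts : ∫ s in a..b, u s * v' s = -∫ s in a..b, u' s * v s := by
    rw [intervalIntegral.integral_mul_deriv_eq_deriv_mul hu hv hu' hv', hab, sub_self, zero_sub]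
  rw [intervalIntegral.integral_const_mul, intervalIntegral.integral_sub huv' hu'v]
  linarith

/-- The standard area form `det(x, y) = x¹ y² - x² y¹` on the plane, as a bilinear form. -/
def planeDet (R : Type*) [CommRing R] : R × R →ₗ[R] R × R →ₗ[R] R :=
  (LinearMap.mul R R).compl₁₂ (LinearMap.fst R R R) (LinearMap.snd R R R) -
    (LinearMap.mul R R).compl₁₂ (LinearMap.snd R R R) (LinearMap.fst R R R)

lemma planeDet_apply {R : Type*} [CommRing R] (x y : R × R) :
    planeDet R x y = x.1 * y.2 - x.2 * y.1 := rfl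

lemma isAlt_planeDet (R : Type*) [CommRing R] : (planeDet R).IsAlt := fun x ↦ by
  rw [planeDet_apply, mul_comm, sub_self]

section EquicentroaffineCurve

variable {V : Type*} [NormedAddCommGroup V] [NormedSpace ℝ V]

/-- The vector field `-(1/2) α_s γ + α γ_s` along `γ`: the infinitesimal deformation with tangential
coefficient `α` that preserves the normalization `ω(γ, γ_s) = 1`. -/
noncomputable def equicentroaffineField (γ : ℝ → V) (α : ℝ → ℝ) (s : ℝ) : V :=
  (-(1 / 2) * deriv α s) • γ s + α s • deriv γ s

variable {ω : V →ₗ[ℝ] V →ₗ[ℝ] ℝ} {γ : ℝ → V} {α β : ℝ → ℝ}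

lemma equicentroaffineField_pairing (hω : ω.IsAlt) {s : ℝ} (hγ : ω (γ s) (deriv γ s) = 1) :
    ω (equicentroaffineField γ α s) (equicentroaffineField γ β s) =
      1 / 2 * (α s * deriv β s - deriv α s * β s) := by
  rw [equicentroaffineField, equicentroaffineField, isAlt_smul_add_smul hω, hγ]
  ring

theorem omega0_formula_general {a b : ℝ} (hω : ω.IsAlt)
    (hγ : ∀ s ∈ uIcc a b, ω (γ s) (deriv γ s) = 1)
    (hα : ∀ s ∈ uIcc a b, DifferentiableAt ℝ α s) (hβ : ∀ s ∈ uIcc a b, DifferentiableAt ℝ β s)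
    (hα' : IntervalIntegrable (deriv α) volume a b)
    (hβ' : IntervalIntegrable (deriv β) volume a b) (hab : α b * β b = α a * β a) :
    ∫ s in a..b, ω (equicentroaffineField γ α s) (equicentroaffineField γ β s) =
      ∫ s in a..b, α s * deriv β s :=
  calc
    _ = ∫ s in a..b, 1 / 2 * (α s * deriv β s - deriv α s * β s) :=
      intervalIntegral.integral_congr fun s hs ↦ equicentroaffineField_pairing hω (hγ s hs)
    _ = ∫ s in a..b, α s * deriv β s :=
      integral_half_wronskian (fun s hs ↦ (hα s hs).hasDerivAt) (fun s hs ↦ (hβ s hs).hasDerivAt)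
        hα' hβ' hab

end EquicentroaffineCurve

/-- for tangent vectors `X = -(1/2) α_s γ + α γ_s` and
`Y = -(1/2) β_s γ + β γ_s` to the space of closed equicentroaffine plane curves,
the presymplectic form satisfies `∫₀^{2π} det(X, Y) ds = ∫₀^{2π} α β_s ds`. -/
theorem omega0_formula
    (γ : ℝ → ℝ × ℝ) (α β : ℝ → ℝ) (X Y : ℝ → ℝ × ℝ)
    (hγ : ContDiff ℝ (⊤ : ℕ∞) γ)
    (hα : ContDiff ℝ (⊤ : ℕ∞) α)
    (hβ : ContDiff ℝ (⊤ : ℕ∞) β)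
    (hγper : ∀ s, γ (s + 2 * Real.pi) = γ s)
    (hαper : ∀ s, α (s + 2 * Real.pi) = α s)
    (hβper : ∀ s, β (s + 2 * Real.pi) = β s)
    (hdet : ∀ s, (γ s).1 * (deriv γ s).2 - (γ s).2 * (deriv γ s).1 = 1)
    (hX : ∀ s, X s = (-(1 / 2) * deriv α s) • γ s + α s • deriv γ s)
    (hY : ∀ s, Y s = (-(1 / 2) * deriv β s) • γ s + β s • deriv γ s) :
    ∫ s in (0 : ℝ)..(2 * Real.pi), ((X s).1 * (Y s).2 - (X s).2 * (Y s).1)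
      = ∫ s in (0 : ℝ)..(2 * Real.pi), α s * deriv β s := by
  obtain rfl : X = equicentroaffineField γ α := funext hX
  obtain rfl : Y = equicentroaffineField γ β := funext hY
  have endpoints : α (2 * Real.pi) * β (2 * Real.pi) = α 0 * β 0 := by
    rw [← hαper 0, ← hβper 0, zero_add]
  exact omega0_formula_general (isAlt_planeDet ℝ) (fun s _ ↦ hdet s)
    (fun s _ ↦ hα.differentiable (by simp) s) (fun s _ ↦ hβ.differentiable (by simp) s)
    ((hα.continuous_deriv (by simp)).intervalIntegrable _ _)
    ((hβ.continuous_deriv (by simp)).intervalIntegrable _ _) endpoints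
end

section
/- Let α, β, κ : ℝ → ℝ be smooth 2π-periodic functions. Then ∫₀^{2π} α ((1/2) β_sss + 2 κ β_s + κ_s β) ds = - ∫₀^{2π} β ((1/2) α_sss + 2 κ α_s + κ_s α) ds. (This expresses the skew-symmetry of the presymplectic form ω₁ on the space of closed equicentroaffine curves.) -/
/-!
The operator `P = (1/2) D³ + 2 κ D + κ'`, for which `P β = Ω β_s`, is formally skew-adjoint:
`α P β + β P α` is the derivative of
`(1/2) (α β'' - α' β' + α'' β) + 2 κ α β`.
This primitive is periodic when `α`, `β`, `κ` are, so its increment over a period vanishes.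
-/

section Deriv

variable {𝕜 F : Type*} [NontriviallyNormedField 𝕜] [NormedAddCommGroup F] [NormedSpace 𝕜 F]

theorem periodic_deriv {f : 𝕜 → F} {c : 𝕜} (hf : Function.Periodic f c) :
    Function.Periodic (deriv f) c := fun x => by
  rw [← deriv_comp_add_const, funext hf]

end Deriv

section KdV

variable {A : Type*} [NormedCommRing A] [NormedAlgebra ℝ A] {α β κ : ℝ → A}

/-- The second Hamiltonian operator `(1/2) D³ + 2 κ D + κ'` of the KdV equation, that is, the
composite of the recursion operator `Ω` with `D`. The composite is taken as the primitive notion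
in order to avoid choosing an antiderivative `D⁻¹`. -/
noncomputable def kdvOperator (κ β : ℝ → A) (s : ℝ) : A :=
  (1 / 2 : ℝ) • deriv (deriv (deriv β)) s + 2 * κ s * deriv β s + deriv κ s * β s

/-- The bilinear concomitant of `kdvOperator κ`: the boundary term in the Lagrange identity
expressing that this operator is formally skew-adjoint. -/
noncomputable def kdvConcomitant (κ α β : ℝ → A) (s : ℝ) : A :=
  (1 / 2 : ℝ) • (α s * deriv (deriv β) s - deriv α s * deriv β s + deriv (deriv α) s * β s)
    + 2 * (κ s * (α s * β s))

theorem continuous_kdvOperator (hκ : ContDiff ℝ 1 κ) (hβ : ContDiff ℝ 3 β) :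
    Continuous (kdvOperator κ β) := by
  have hβ₁ : ContDiff ℝ 2 (deriv β) := hβ.deriv'
  have hβ₂ : ContDiff ℝ 1 (deriv (deriv β)) := hβ₁.deriv'
  have hβ₃ : Continuous (deriv (deriv (deriv β))) := hβ₂.continuous_deriv_one
  have hκ₁ : Continuous (deriv κ) := hκ.continuous_deriv_one
  exact ((hβ₃.const_smul _).add ((continuous_const.mul hκ.continuous).mul hβ₁.continuous)).add
    (hκ₁.mul hβ.continuous)

theorem hasDerivAt_kdvConcomitant (hκ : ContDiff ℝ 1 κ) (hα : ContDiff ℝ 3 α)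
    (hβ : ContDiff ℝ 3 β) (s : ℝ) :
    HasDerivAt (kdvConcomitant κ α β) (α s * kdvOperator κ β s + β s * kdvOperator κ α s) s := by
  have jet {f : ℝ → A} (hf : ContDiff ℝ 3 f) :
      HasDerivAt f (deriv f s) s ∧ HasDerivAt (deriv f) (deriv (deriv f) s) s ∧
        HasDerivAt (deriv (deriv f)) (deriv (deriv (deriv f)) s) s := by
    have hf₁ : ContDiff ℝ 2 (deriv f) := hf.deriv'
    have hf₂ : ContDiff ℝ 1 (deriv (deriv f)) := hf₁.deriv'
    exact ⟨(hf.differentiable (by norm_num) s).hasDerivAt,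
      (hf₁.differentiable (by norm_num) s).hasDerivAt,
      (hf₂.differentiable (by norm_num) s).hasDerivAt⟩
  obtain ⟨dα, dα₁, dα₂⟩ := jet hα
  obtain ⟨dβ, dβ₁, dβ₂⟩ := jet hβ
  have dκ : HasDerivAt κ (deriv κ s) s := (hκ.differentiable (by norm_num) s).hasDerivAt
  have dThird := (((dα.mul dβ₂).sub (dα₁.mul dβ₁)).add (dα₂.mul dβ)).const_smul (1 / 2 : ℝ)
  have dFirst := (dκ.mul (dα.mul dβ)).const_mul 2
  refine (dThird.add dFirst).congr_deriv ?_
  simp only [kdvOperator, Pi.mul_apply, Algebra.smul_def]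
  ring

theorem periodic_kdvConcomitant {T : ℝ} (hκ : Function.Periodic κ T)
    (hα : Function.Periodic α T) (hβ : Function.Periodic β T) :
    Function.Periodic (kdvConcomitant κ α β) T := fun s => by
  have hα₁ := periodic_deriv hα
  have hβ₁ := periodic_deriv hβ
  simp only [kdvConcomitant, hκ s, hα s, hβ s, hα₁ s, hβ₁ s, periodic_deriv hα₁ s,
    periodic_deriv hβ₁ s]

theorem integral_mul_kdvOperator_add_integral_mul_kdvOperator [CompleteSpace A]
    (hκ : ContDiff ℝ 1 κ) (hα : ContDiff ℝ 3 α) (hβ : ContDiff ℝ 3 β) (a b : ℝ) :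
    (∫ s in a..b, α s * kdvOperator κ β s) + ∫ s in a..b, β s * kdvOperator κ α s =
      kdvConcomitant κ α β b - kdvConcomitant κ α β a := by
  have hαβ : Continuous fun s => α s * kdvOperator κ β s :=
    hα.continuous.mul (continuous_kdvOperator hκ hβ)
  have hβα : Continuous fun s => β s * kdvOperator κ α s :=
    hβ.continuous.mul (continuous_kdvOperator hκ hα)
  rw [← intervalIntegral.integral_add (hαβ.intervalIntegrable a b) (hβα.intervalIntegrable a b)]
  exact intervalIntegral.integral_eq_sub_of_hasDerivAt
    (fun s _ => hasDerivAt_kdvConcomitant hκ hα hβ s) ((hαβ.add hβα).intervalIntegrable a b)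

theorem omega1_skew_symmetric_general [CompleteSpace A] {T : ℝ}
    (hα : ContDiff ℝ 3 α) (hβ : ContDiff ℝ 3 β) (hκ : ContDiff ℝ 1 κ)
    (hαper : Function.Periodic α T) (hβper : Function.Periodic β T)
    (hκper : Function.Periodic κ T) (a : ℝ) :
    ∫ s in a..(a + T), α s * kdvOperator κ β s =
      -∫ s in a..(a + T), β s * kdvOperator κ α s := by
  rw [eq_neg_iff_add_eq_zero,
    integral_mul_kdvOperator_add_integral_mul_kdvOperator hκ hα hβ,
    periodic_kdvConcomitant hκper hαper hβper a, sub_self]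

end KdV

/-- skew-symmetry of the form `ω₁`: for smooth 2π-periodic `α, β, κ`,
`∫₀^{2π} α Ω β_s ds = - ∫₀^{2π} β Ω α_s ds`, where
`Ω β_s = (1/2) β_sss + 2 κ β_s + κ_s β`. -/
theorem omega1_skew_symmetric
    (α β κ : ℝ → ℝ)
    (hα : ContDiff ℝ (⊤ : ℕ∞) α)
    (hβ : ContDiff ℝ (⊤ : ℕ∞) β)
    (hκ : ContDiff ℝ (⊤ : ℕ∞) κ)
    (hαper : ∀ s, α (s + 2 * Real.pi) = α s)
    (hβper : ∀ s, β (s + 2 * Real.pi) = β s)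
    (hκper : ∀ s, κ (s + 2 * Real.pi) = κ s) :
    ∫ s in (0 : ℝ)..(2 * Real.pi),
        α s * ((1 / 2) * deriv (deriv (deriv β)) s + 2 * κ s * deriv β s + deriv κ s * β s)
      = - ∫ s in (0 : ℝ)..(2 * Real.pi),
          β s * ((1 / 2) * deriv (deriv (deriv α)) s + 2 * κ s * deriv α s + deriv κ s * α s) := by
  simpa only [kdvOperator, smul_eq_mul, zero_add] using
    omega1_skew_symmetric_general (contDiff_infty.1 hα 3) (contDiff_infty.1 hβ 3)
      (contDiff_infty.1 hκ 1) hαper hβper hκper 0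
end

section
/- Let α, κ : ℝ → ℝ be smooth 2π-periodic functions. Then ∫₀^{2π} κ ((1/2) α_sss + 2 κ α_s + κ_s α) ds = ∫₀^{2π} ((1/2) κ_ss + (3/2) κ²) α_s ds. (This expresses that along a motion of closed equicentroaffine curves with motion function α, the derivative of H₂ = ∫ (1/2) κ² ds equals ω₁(X₁, X) = ω₀(X₂, X), so the first KdV vector field X₁ is Hamiltonian for H₂ with respect to ω₁.) -/
/-!
Integration by parts over a period has no boundary terms, so the recursion operator
`Ω = (1/2) D² + 2κ + κ' D⁻¹` has the formal adjoint `Ω* = (1/2) D² + 2κ - D⁻¹ κ'`. The periodic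
function `κ² / 2` is an antiderivative of `κ' κ`, so that `Ω* κ = (1/2) κ'' + (3/2) κ²`, and the
identity is `∫ κ Ω α' = ∫ (Ω* κ) α'`.
-/

theorem periodic_deriv_s8 {E : Type*} [NormedAddCommGroup E] [NormedSpace ℝ E] {f : ℝ → E} {T : ℝ}
    (hf : Function.Periodic f T) : Function.Periodic (deriv f) T := fun s ↦ by
  rw [← deriv_comp_add_const, hf.funext]

section IntegrationByParts

variable {A : Type*} [NormedRing A] [NormedAlgebra ℝ A] [CompleteSpace A]

theorem integral_mul_deriv_eq_neg_of_periodic {u v u' v' : ℝ → A} {a T : ℝ}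
    (hu : ∀ s, HasDerivAt u (u' s) s) (hv : ∀ s, HasDerivAt v (v' s) s)
    (hu' : IntervalIntegrable u' MeasureTheory.volume a (a + T))
    (hv' : IntervalIntegrable v' MeasureTheory.volume a (a + T))
    (hu_per : Function.Periodic u T) (hv_per : Function.Periodic v T) :
    ∫ s in a..a + T, u s * v' s = -∫ s in a..a + T, u' s * v s := by
  rw [intervalIntegral.integral_mul_deriv_eq_deriv_mul (fun s _ ↦ hu s) (fun s _ ↦ hv s) hu' hv',
    hu_per a, hv_per a, sub_self, zero_sub]

theorem integral_mul_deriv_deriv_of_periodic {u v : ℝ → A} {T : ℝ}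
    (hu : ContDiff ℝ 2 u) (hv : ContDiff ℝ 2 v)
    (hu_per : Function.Periodic u T) (hv_per : Function.Periodic v T) (a : ℝ) :
    ∫ s in a..a + T, u s * deriv (deriv v) s = ∫ s in a..a + T, deriv (deriv u) s * v s := by
  have hu₁ : ContDiff ℝ 1 (deriv u) := hu.deriv'
  have hv₁ : ContDiff ℝ 1 (deriv v) := hv.deriv'
  have hasDerivAt_u s := (hu.differentiable two_ne_zero s).hasDerivAt
  have hasDerivAt_v s := (hv.differentiable two_ne_zero s).hasDerivAt
  have hasDerivAt_u₁ s := (hu.differentiable_deriv_two s).hasDerivAt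
  have hasDerivAt_v₁ s := (hv.differentiable_deriv_two s).hasDerivAt
  have integrable_u₁ := hu₁.continuous.intervalIntegrable (μ := MeasureTheory.volume) a (a + T)
  have integrable_v₁ := hv₁.continuous.intervalIntegrable (μ := MeasureTheory.volume) a (a + T)
  calc
    ∫ s in a..a + T, u s * deriv (deriv v) s = -∫ s in a..a + T, deriv u s * deriv v s :=
      integral_mul_deriv_eq_neg_of_periodic hasDerivAt_u hasDerivAt_v₁ integrable_u₁
        (hv₁.continuous_deriv_one.intervalIntegrable _ _) hu_per (periodic_deriv_s8 hv_per)
    _ = ∫ s in a..a + T, deriv (deriv u) s * v s := by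
      rw [integral_mul_deriv_eq_neg_of_periodic hasDerivAt_u₁ hasDerivAt_v
        (hu₁.continuous_deriv_one.intervalIntegrable _ _) integrable_v₁
        (periodic_deriv_s8 hu_per) hv_per, neg_neg]

end IntegrationByParts

section Recursion

variable {𝕜 : Type*} [RCLike 𝕜] {κ α f F : ℝ → 𝕜} {T : ℝ}

/-- The function `Ω α'`, for the KdV recursion operator `Ω = (1/2) D² + 2κ + κ' D⁻¹` of the
curvature `κ`. Taking the motion function `α` as the argument fixes the antiderivative: `D⁻¹ α'`
is `α`. -/
noncomputable def kdvRecursionDeriv (κ α : ℝ → 𝕜) (s : ℝ) : 𝕜 :=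
  (1 / 2) * deriv (deriv (deriv α)) s + 2 * κ s * deriv α s + deriv κ s * α s

/- The function `F` stands for `D⁻¹ (κ' f)`, so the right-hand side pairs `Ω* f` with `α'`. -/
theorem integral_mul_kdvRecursionDeriv (hα : ContDiff ℝ 3 α) (hκ : ContDiff ℝ 1 κ)
    (hf : ContDiff ℝ 2 f) (hF : ∀ s, HasDerivAt F (deriv κ s * f s) s)
    (hα_per : Function.Periodic α T) (hf_per : Function.Periodic f T)
    (hF_per : Function.Periodic F T) (a : ℝ) :
    ∫ s in a..a + T, f s * kdvRecursionDeriv κ α s =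
      ∫ s in a..a + T, ((1 / 2) * deriv (deriv f) s + 2 * κ s * f s - F s) * deriv α s := by
  have hα₁ : ContDiff ℝ 2 (deriv α) := hα.deriv'
  have hα₂ : ContDiff ℝ 1 (deriv (deriv α)) := hα₁.deriv'
  have hf₁ : ContDiff ℝ 1 (deriv f) := hf.deriv'
  have : Continuous (deriv (deriv (deriv α))) := hα₂.continuous_deriv_one
  have : Continuous (deriv κ) := hκ.continuous_deriv_one
  have : Continuous (deriv (deriv f)) := hf₁.continuous_deriv_one
  have : Continuous F := continuous_iff_continuousAt.2 fun s ↦ (hF s).continuousAt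
  have third_order_term : ∫ s in a..a + T, f s * deriv (deriv (deriv α)) s =
      ∫ s in a..a + T, deriv (deriv f) s * deriv α s :=
    integral_mul_deriv_deriv_of_periodic hf hα₁ hf_per (periodic_deriv_s8 hα_per) a
  have nonlocal_term : ∫ s in a..a + T, deriv κ s * f s * α s =
      -∫ s in a..a + T, F s * deriv α s := by
    rw [integral_mul_deriv_eq_neg_of_periodic hF
      (fun s ↦ (hα.differentiable three_ne_zero s).hasDerivAt)
      (Continuous.intervalIntegrable (by fun_prop) _ _)
      (hα₁.continuous.intervalIntegrable _ _) hF_per hα_per, neg_neg]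
  calc
    ∫ s in a..a + T, f s * kdvRecursionDeriv κ α s
      = ∫ s in a..a + T, ((1 / 2) * (f s * deriv (deriv (deriv α)) s) +
          2 * κ s * f s * deriv α s + deriv κ s * f s * α s) := by
        congr with s
        rw [kdvRecursionDeriv]
        ring
    _ = (1 / 2) * (∫ s in a..a + T, deriv (deriv f) s * deriv α s) +
          (∫ s in a..a + T, 2 * κ s * f s * deriv α s) - ∫ s in a..a + T, F s * deriv α s := by
        rw [intervalIntegral.integral_add, intervalIntegral.integral_add,
          intervalIntegral.integral_const_mul, third_order_term, nonlocal_term, sub_eq_add_neg]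
        all_goals exact Continuous.intervalIntegrable (by fun_prop) _ _
    _ = ∫ s in a..a + T, ((1 / 2) * deriv (deriv f) s + 2 * κ s * f s - F s) * deriv α s := by
        simp only [sub_mul, add_mul, mul_assoc (1 / 2 : 𝕜)]
        rw [intervalIntegral.integral_sub, intervalIntegral.integral_add,
          intervalIntegral.integral_const_mul]
        all_goals exact Continuous.intervalIntegrable (by fun_prop) _ _

theorem X1_Hamiltonian_for_H2_general (hα : ContDiff ℝ 3 α) (hκ : ContDiff ℝ 2 κ)
    (hα_per : Function.Periodic α T) (hκ_per : Function.Periodic κ T) (a : ℝ) :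
    ∫ s in a..a + T, κ s * kdvRecursionDeriv κ α s =
      ∫ s in a..a + T, ((1 / 2) * deriv (deriv κ) s + (3 / 2) * κ s ^ 2) * deriv α s := by
  have hasDerivAt_half_sq (s : ℝ) :
      HasDerivAt (fun t ↦ (1 / 2) * κ t ^ 2) (deriv κ s * κ s) s := by
    refine (((hκ.differentiable two_ne_zero s).hasDerivAt.fun_pow 2).const_mul
      (1 / 2)).congr_deriv ?_
    ring
  have half_sq_periodic : Function.Periodic (fun t ↦ (1 / 2) * κ t ^ 2) T := fun s ↦ by
    simp only [hκ_per s]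
  rw [integral_mul_kdvRecursionDeriv hα (hκ.of_le one_le_two) hκ hasDerivAt_half_sq
    hα_per hκ_per half_sq_periodic a]
  congr with s
  ring

end Recursion

/-- for smooth 2π-periodic `α, κ`,
`∫₀^{2π} κ Ω α_s ds = ∫₀^{2π} ((1/2) κ_ss + (3/2) κ²) α_s ds`,
i.e. the first KdV vector field is Hamiltonian for `H₂` with respect to `ω₁`. -/
theorem X1_Hamiltonian_for_H2
    (α κ : ℝ → ℝ)
    (hα : ContDiff ℝ (⊤ : ℕ∞) α)
    (hκ : ContDiff ℝ (⊤ : ℕ∞) κ)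
    (hαper : ∀ s, α (s + 2 * Real.pi) = α s)
    (hκper : ∀ s, κ (s + 2 * Real.pi) = κ s) :
    ∫ s in (0 : ℝ)..(2 * Real.pi),
        κ s * ((1 / 2) * deriv (deriv (deriv α)) s + 2 * κ s * deriv α s + deriv κ s * α s)
      = ∫ s in (0 : ℝ)..(2 * Real.pi),
          ((1 / 2) * deriv (deriv κ) s + (3 / 2) * (κ s) ^ 2) * deriv α s := by
  simpa only [zero_add, kdvRecursionDeriv] using
    X1_Hamiltonian_for_H2_general (contDiff_infty.1 hα 3) (contDiff_infty.1 hκ 2) hαper hκper 0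
end

section
/- Let κ̂ : ℝ → ℝ and μ̃, P : ℝ → ℂ be smooth functions with P_s = κ̂ μ̃. Define κ = (i/2) κ̂_s + (1/4) κ̂² (the Miura transformation), W = (1/2)(μ̃_ss + κ̂² μ̃ + κ̂_s P), and f = i μ̃_s + κ̂ μ̃. Then i W_s + κ̂ W = (1/2) f_ss + 2 κ f + κ_s (i μ̃ + P). (This is the operator identity (i D_s + κ̂) Ω̂ = Ω (i D_s + κ̂) intertwining the mKdV and KdV recursion operators, written with explicit antiderivatives.) -/
open Complex

/-!
Write `D = D_s` and let `q = i μ + D⁻¹(v μ)`, so that `D q = (i D + v) μ`. Both recursion operators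
factor through the first-order operators `i D + v` and `-i D + v`:
`Ω̂ = ½ D (-i D + v) D⁻¹ (i D + v)`, that is `Ω̂ μ = ½ D (-i D + v) q`, and, for the Miura
transform `κ` of `v`, `Ω D = ½ (i D + v) D (-i D + v)`. Hence both `(i D + v) Ω̂ μ` and
`Ω (i D + v) μ = Ω D q` are equal to `½ (i D + v) D (-i D + v) q`.
-/

noncomputable section Miura

variable {𝕜 F : Type*} [NontriviallyNormedField 𝕜] [NormedField F] [NormedAlgebra 𝕜 F]

/-- The first-order operator `a D + v`. Taken with `a = i` it intertwines the two recursion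
operators, and with `a = ± i` it gives their factorizations. -/
def miuraOp (a : F) (v g : 𝕜 → F) : 𝕜 → F :=
  fun s => a * deriv g s + v s * g s

/-- The Miura transform `(i/2) v_s + (1/4) v²` of `v`, where `i` is a square root of `-1` in `F`. -/
def miuraTransform (i : F) (v : 𝕜 → F) : 𝕜 → F :=
  fun s => (i / 2) * deriv v s + (1 / 4) * v s ^ 2

/-- The mKdV recursion operator `(1/2)(D² + v² + v_s D⁻¹ v)` applied to `μ`. The function `P` is the
chosen antiderivative `D⁻¹ (v μ)`. -/
def mkdvRecursion (v μ P : 𝕜 → F) : 𝕜 → F :=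
  fun s => (1 / 2) * (deriv (deriv μ) s + v s ^ 2 * μ s + deriv v s * P s)

/-- The KdV recursion operator `(1/2) D² + 2 u + u_s D⁻¹` applied to `f`. The function `q` is the
chosen antiderivative `D⁻¹ f`. -/
def kdvRecursion (u f q : 𝕜 → F) : 𝕜 → F :=
  fun s => (1 / 2) * deriv (deriv f) s + 2 * u s * f s + deriv u s * q s

theorem miuraOp_const_mul (a c : F) (v g : 𝕜 → F) :
    miuraOp a v (fun s => c * g s) = fun s => c * miuraOp a v g s := by
  funext s
  simp only [miuraOp, deriv_const_mul_field]
  ring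

theorem deriv_miuraOp (a : F) {v g : 𝕜 → F} (hv : Differentiable 𝕜 v) (hg : ContDiff 𝕜 2 g) :
    deriv (miuraOp a v g) = fun s => miuraOp a v (deriv g) s + deriv v s * g s := by
  funext s
  have hg₀ := (hg.differentiable two_ne_zero s).hasDerivAt
  have hg₁ := (hg.differentiable_deriv_two s).hasDerivAt
  refine ((hg₁.const_mul a).add ((hv s).hasDerivAt.mul hg₀)).deriv.trans ?_
  rw [miuraOp]
  ring

theorem deriv_deriv_miuraOp (a : F) {v g : 𝕜 → F} (hv : ContDiff 𝕜 2 v) (hg : ContDiff 𝕜 3 g) :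
    deriv (deriv (miuraOp a v g)) = fun s =>
      miuraOp a v (deriv (deriv g)) s + 2 * deriv v s * deriv g s + deriv (deriv v) s * g s := by
  have hv₀ := hv.differentiable two_ne_zero
  have hg' : ContDiff 𝕜 2 (deriv g) := hg.deriv'
  have hL : Differentiable 𝕜 (miuraOp a v (deriv g)) :=
    (hg'.differentiable_deriv_two.const_mul a).add (hv₀.mul (hg'.differentiable two_ne_zero))
  funext s
  have hvg := (hv.differentiable_deriv_two s).hasDerivAt.mul
    (hg.differentiable three_ne_zero s).hasDerivAt
  rw [deriv_miuraOp a hv₀ (hg.of_le (by norm_num))]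
  refine ((hL s).hasDerivAt.add hvg).deriv.trans ?_
  rw [deriv_miuraOp a hv₀ hg']
  ring

theorem deriv_miuraTransform [NeZero (2 : F)] (i : F) {v : 𝕜 → F} (hv : ContDiff 𝕜 2 v) :
    deriv (miuraTransform i v) = fun s => (1 / 2) * miuraOp i v (deriv v) s := by
  funext s
  have hv₀ := (hv.differentiable two_ne_zero s).hasDerivAt
  have hv₁ := (hv.differentiable_deriv_two s).hasDerivAt
  refine ((hv₁.const_mul (i / 2)).add ((hv₀.pow 2).const_mul (1 / 4))).deriv.trans ?_
  have h4 : (4 : F) = 2 * 2 := by norm_num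
  simp only [miuraOp, h4]
  field_simp
  ring

theorem kdvRecursion_miuraTransform_deriv [NeZero (2 : F)] {i : F} (hi : i ^ 2 = -1)
    {v q : 𝕜 → F} (hv : ContDiff 𝕜 2 v) (hq : ContDiff 𝕜 3 q) :
    kdvRecursion (miuraTransform i v) (deriv q) q =
      fun s => (1 / 2) * miuraOp i v (deriv (miuraOp (-i) v q)) s := by
  funext s
  have h4 : (4 : F) = 2 * 2 := by norm_num
  rw [kdvRecursion, deriv_miuraTransform i hv, miuraOp, deriv_deriv_miuraOp (-i) hv hq,
    deriv_miuraOp (-i) (hv.differentiable two_ne_zero) (hq.of_le (by norm_num))]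
  simp only [miuraOp, miuraTransform, h4]
  field_simp
  linear_combination (deriv (deriv (deriv q)) s) * hi

section Potential

variable {v μ P : 𝕜 → F}

theorem deriv_const_mul_add_eq_miuraOp (i : F) (hμ : Differentiable 𝕜 μ)
    (hP : ∀ s, HasDerivAt P (v s * μ s) s) :
    deriv (fun s => i * μ s + P s) = miuraOp i v μ :=
  funext fun s => (((hμ s).hasDerivAt.const_mul i).add (hP s)).deriv

theorem mkdvRecursion_eq_deriv_miuraOp {i : F} (hi : i ^ 2 = -1) (hv : Differentiable 𝕜 v)
    (hμ : ContDiff 𝕜 2 μ) (hP : ∀ s, HasDerivAt P (v s * μ s) s) :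
    mkdvRecursion v μ P =
      fun s => (1 / 2) * deriv (miuraOp (-i) v fun s => i * μ s + P s) s := by
  have hL : (miuraOp (-i) v fun s => i * μ s + P s) = fun s => deriv μ s + v s * P s := by
    funext s
    rw [miuraOp, deriv_const_mul_add_eq_miuraOp i (hμ.differentiable two_ne_zero) hP, miuraOp]
    linear_combination (-deriv μ s) * hi
  funext s
  have hD : deriv (fun s => deriv μ s + v s * P s) s =
      deriv (deriv μ) s + (deriv v s * P s + v s * (v s * μ s)) :=
    ((hμ.differentiable_deriv_two s).hasDerivAt.add ((hv s).hasDerivAt.mul (hP s))).deriv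
  rw [mkdvRecursion, hL, hD]
  ring

theorem miura_intertwining_general [NeZero (2 : F)] {i : F} (hi : i ^ 2 = -1)
    (hv : ContDiff 𝕜 2 v) (hμ : ContDiff 𝕜 3 μ) (hP : ∀ s, HasDerivAt P (v s * μ s) s) :
    miuraOp i v (mkdvRecursion v μ P) =
      kdvRecursion (miuraTransform i v) (miuraOp i v μ) (fun s => i * μ s + P s) := by
  have hμ₂ : ContDiff 𝕜 2 μ := hμ.of_le (by norm_num)
  have hP₃ : ContDiff 𝕜 3 P := by
    have hP' : deriv P = fun s => v s * μ s := funext fun s => (hP s).deriv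
    exact (contDiff_succ_iff_deriv (n := 2)).2
      ⟨fun s => (hP s).differentiableAt, by simp, hP' ▸ hv.mul hμ₂⟩
  rw [mkdvRecursion_eq_deriv_miuraOp hi (hv.differentiable two_ne_zero) hμ₂ hP, miuraOp_const_mul,
    ← deriv_const_mul_add_eq_miuraOp i (hμ.differentiable three_ne_zero) hP,
    kdvRecursion_miuraTransform_deriv hi hv ((contDiff_const.mul hμ).add hP₃)]

end Potential

end Miura

theorem deriv_ofReal_comp {g : ℝ → ℝ} {s : ℝ} (hg : DifferentiableAt ℝ g s) :
    deriv (fun t => (g t : ℂ)) s = Complex.ofReal (deriv g s) :=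
  hg.hasDerivAt.ofReal_comp.deriv

/-- the intertwining identity `(i D_s + κ̂) Ω̂ = Ω (i D_s + κ̂)` between the
mKdV and KdV recursion operators under the Miura transformation
`κ = (i/2) κ̂_s + (1/4) κ̂²`, written with explicit antiderivatives: with `P_s = κ̂ μ̃`,
`W = Ω̂ μ̃ = (1/2)(μ̃_ss + κ̂² μ̃ + κ̂_s P)` and `f = i μ̃_s + κ̂ μ̃`, one has
`i W_s + κ̂ W = (1/2) f_ss + 2 κ f + κ_s (i μ̃ + P)`. -/
theorem miura_intertwining
    (κh : ℝ → ℝ) (μt P κ W f : ℝ → ℂ)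
    (hκh : ContDiff ℝ (⊤ : ℕ∞) κh)
    (hμt : ContDiff ℝ (⊤ : ℕ∞) μt)
    (hP : ContDiff ℝ (⊤ : ℕ∞) P)
    (hPs : ∀ s, deriv P s = (κh s : ℂ) * μt s)
    (hκ : ∀ s, κ s = (I / 2) * Complex.ofReal (deriv κh s) + (1 / 4) * (κh s : ℂ) ^ 2)
    (hW : ∀ s, W s = (1 / 2) *
      (deriv (deriv μt) s + (κh s : ℂ) ^ 2 * μt s + Complex.ofReal (deriv κh s) * P s))
    (hf : ∀ s, f s = I * deriv μt s + (κh s : ℂ) * μt s) :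
    ∀ s, I * deriv W s + (κh s : ℂ) * W s
      = (1 / 2) * deriv (deriv f) s + 2 * κ s * f s + deriv κ s * (I * μt s + P s) := by
  have hκh' (s : ℝ) := deriv_ofReal_comp (hκh.differentiable (by simp) s)
  have hP' (s : ℝ) := hPs s ▸ (hP.differentiable (by simp) s).hasDerivAt
  simp only [funext hκ, funext hW, funext hf, ← hκh']
  exact congrFun <| miura_intertwining_general I_sq
    (ofRealCLM.contDiff.comp (contDiff_infty.1 hκh 2)) (contDiff_infty.1 hμt 3) hP'
end

section
/- Let κ̂, λ, μ, λ̃, μ̃ : ℝ → ℝ be smooth 2π-periodic functions with λ_s = κ̂ μ and λ̃_s = κ̂ μ̃. Then ∫₀^{2π} (λ + iμ)(λ̃ + iμ̃)_s ds = ∫₀^{2π} (κ̂ λ + μ_s) μ̃ ds; in particular the left-hand (a priori complex) integral is real. (This is the identity ω̂₀ = Φ*ω₀: the presymplectic form ω̂₀ on closed Euclidean plane curves is the pullback under the geometric Miura transformation of the form ω₀ on complexified closed equicentroaffine curves.) -/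
/-!
Write `α = λ + iμ` and `β = λ̃ + iμ̃`. The arclength conditions `λ_s = κ̂ μ` and `λ̃_s = κ̂ μ̃`
give the pointwise identity `α β_s = (κ̂ λ + μ_s) μ̃ + (i α μ̃)_s`, so the two integrands differ
by the derivative of a periodic function.
-/

open MeasureTheory

lemma intervalIntegrable_ofReal_comp {𝕜 : Type*} [RCLike 𝕜] {f : ℝ → ℝ} {ν : Measure ℝ} {a b : ℝ}
    (hf : IntervalIntegrable f ν a b) : IntervalIntegrable (fun s => (f s : 𝕜)) ν a b :=
  ⟨hf.1.ofReal, hf.2.ofReal⟩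

/-- The pushforward of the Euclidean tangent vector `λ T + μ N` under the geometric Miura
transformation, encoded by the complex function `α = λ + iμ` that determines it. -/
noncomputable def miuraTangent (lam mu : ℝ → ℝ) (s : ℝ) : ℂ :=
  lam s + Complex.I * mu s

section Pointwise

variable {lam mu tmu : ℝ → ℝ} {s : ℝ}

lemma hasDerivAt_miuraTangent {lam' mu' : ℝ} (hlam : HasDerivAt lam lam' s)
    (hmu : HasDerivAt mu mu' s) :
    HasDerivAt (miuraTangent lam mu) (lam' + Complex.I * mu') s :=
  hlam.ofReal_comp.add (hmu.ofReal_comp.const_mul Complex.I)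

lemma hasDerivAt_I_mul_miuraTangent_mul {k mu' tmu' : ℝ} (hlam : HasDerivAt lam (k * mu s) s)
    (hmu : HasDerivAt mu mu' s) (htmu : HasDerivAt tmu tmu' s) :
    HasDerivAt (fun u => Complex.I * miuraTangent lam mu u * tmu u)
      (miuraTangent lam mu s * ((k * tmu s : ℝ) + Complex.I * tmu')
        - ((k * lam s + mu') * tmu s : ℝ)) s := by
  refine (((hasDerivAt_miuraTangent hlam hmu).const_mul Complex.I).mul
    htmu.ofReal_comp).congr_deriv ?_
  simp only [miuraTangent]
  push_cast
  linear_combination (mu' * tmu s : ℂ) * Complex.I_sq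

end Pointwise

lemma integral_miuraTangent_mul_eq_add_boundary {κ lam mu tmu mu' tmu' : ℝ → ℝ} {a b : ℝ}
    (hlam : ∀ s ∈ Set.uIcc a b, HasDerivAt lam (κ s * mu s) s)
    (hmu : ∀ s ∈ Set.uIcc a b, HasDerivAt mu (mu' s) s)
    (htmu : ∀ s ∈ Set.uIcc a b, HasDerivAt tmu (tmu' s) s)
    (hκ : IntervalIntegrable κ volume a b) (hmu' : IntervalIntegrable mu' volume a b)
    (htmu' : IntervalIntegrable tmu' volume a b) :
    ∫ s in a..b, miuraTangent lam mu s * ((κ s * tmu s : ℝ) + Complex.I * tmu' s)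
      = (∫ s in a..b, (κ s * lam s + mu' s) * tmu s : ℝ)
        + (Complex.I * miuraTangent lam mu b * tmu b
          - Complex.I * miuraTangent lam mu a * tmu a) := by
  have hlam_cont : ContinuousOn lam (Set.uIcc a b) := HasDerivAt.continuousOn hlam
  have htmu_cont : ContinuousOn tmu (Set.uIcc a b) := HasDerivAt.continuousOn htmu
  have hα_cont : ContinuousOn (miuraTangent lam mu) (Set.uIcc a b) :=
    HasDerivAt.continuousOn fun s hs => hasDerivAt_miuraTangent (hlam s hs) (hmu s hs)
  have hcentroaffine : IntervalIntegrable
      (fun s => miuraTangent lam mu s * ((κ s * tmu s : ℝ) + Complex.I * tmu' s)) volume a b :=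
    ((intervalIntegrable_ofReal_comp (hκ.mul_continuousOn htmu_cont)).add
      ((intervalIntegrable_ofReal_comp htmu').const_mul Complex.I)).continuousOn_mul hα_cont
  have heuclidean : IntervalIntegrable
      (fun s => (((κ s * lam s + mu' s) * tmu s : ℝ) : ℂ)) volume a b :=
    intervalIntegrable_ofReal_comp
      (((hκ.mul_continuousOn hlam_cont).add hmu').mul_continuousOn htmu_cont)
  rw [← intervalIntegral.integral_ofReal, ← sub_eq_iff_eq_add',
    ← intervalIntegral.integral_sub hcentroaffine heuclidean]
  exact intervalIntegral.integral_eq_sub_of_hasDerivAt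
    (fun s hs => hasDerivAt_I_mul_miuraTangent_mul (hlam s hs) (hmu s hs) (htmu s hs))
    (hcentroaffine.sub heuclidean)

theorem omega0hat_is_pullback_of_omega0_general {κ lam mu lamt tmu : ℝ → ℝ} {T : ℝ} (a : ℝ)
    (hlam : ∀ s, HasDerivAt lam (κ s * mu s) s) (hlamt : ∀ s, HasDerivAt lamt (κ s * tmu s) s)
    (hmu : Differentiable ℝ mu) (htmu : Differentiable ℝ tmu)
    (hκ : IntervalIntegrable κ volume a (a + T))
    (hmu' : IntervalIntegrable (deriv mu) volume a (a + T))
    (htmu' : IntervalIntegrable (deriv tmu) volume a (a + T))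
    (hlamper : Function.Periodic lam T) (hmuper : Function.Periodic mu T)
    (htmuper : Function.Periodic tmu T) :
    ∫ s in a..(a + T), miuraTangent lam mu s * deriv (miuraTangent lamt tmu) s
      = (∫ s in a..(a + T), (κ s * lam s + deriv mu s) * tmu s : ℝ) := by
  have hβ (s : ℝ) : deriv (miuraTangent lamt tmu) s
      = (κ s * tmu s : ℝ) + Complex.I * deriv tmu s :=
    (hasDerivAt_miuraTangent (hlamt s) (htmu s).hasDerivAt).deriv
  have hαper : miuraTangent lam mu (a + T) = miuraTangent lam mu a := by
    simp only [miuraTangent, hlamper a, hmuper a]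
  simp_rw [hβ]
  rw [integral_miuraTangent_mul_eq_add_boundary (fun s _ => hlam s)
    (fun s _ => (hmu s).hasDerivAt) (fun s _ => (htmu s).hasDerivAt) hκ hmu' htmu',
    hαper, htmuper a, sub_self, add_zero]

/-- the identity `ω̂₀ = Φ*ω₀`: for smooth 2π-periodic `κ̂, λ, μ, λ̃, μ̃`
with `λ_s = κ̂ μ` and `λ̃_s = κ̂ μ̃`, one has
`∫₀^{2π} (λ + iμ)(λ̃ + iμ̃)_s ds = ∫₀^{2π} (κ̂ λ + μ_s) μ̃ ds`;
in particular the left-hand (a priori complex) integral is real. -/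
theorem omega0hat_is_pullback_of_omega0
    (κh lam mu lamt tmu : ℝ → ℝ)
    (hκh : ContDiff ℝ (⊤ : ℕ∞) κh)
    (hlam : ContDiff ℝ (⊤ : ℕ∞) lam)
    (hmu : ContDiff ℝ (⊤ : ℕ∞) mu)
    (hlamt : ContDiff ℝ (⊤ : ℕ∞) lamt)
    (htmu : ContDiff ℝ (⊤ : ℕ∞) tmu)
    (hκhper : ∀ s, κh (s + 2 * Real.pi) = κh s)
    (hlamper : ∀ s, lam (s + 2 * Real.pi) = lam s)
    (hmuper : ∀ s, mu (s + 2 * Real.pi) = mu s)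
    (hlamtper : ∀ s, lamt (s + 2 * Real.pi) = lamt s)
    (htmuper : ∀ s, tmu (s + 2 * Real.pi) = tmu s)
    (harclength : ∀ s, deriv lam s = κh s * mu s)
    (harclengtht : ∀ s, deriv lamt s = κh s * tmu s) :
    ∫ s in (0 : ℝ)..(2 * Real.pi),
        (Complex.ofReal (lam s) + Complex.I * Complex.ofReal (mu s))
          * deriv (fun u => Complex.ofReal (lamt u) + Complex.I * Complex.ofReal (tmu u)) s
      = Complex.ofReal (∫ s in (0 : ℝ)..(2 * Real.pi), (κh s * lam s + deriv mu s) * tmu s) := by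
  have hasDerivAt_lam (s : ℝ) : HasDerivAt lam (κh s * mu s) s :=
    harclength s ▸ (hlam.differentiable (by simp) s).hasDerivAt
  have hasDerivAt_lamt (s : ℝ) : HasDerivAt lamt (κh s * tmu s) s :=
    harclengtht s ▸ (hlamt.differentiable (by simp) s).hasDerivAt
  rw [← zero_add (2 * Real.pi)]
  exact omega0hat_is_pullback_of_omega0_general 0 hasDerivAt_lam hasDerivAt_lamt
    (hmu.differentiable (by simp)) (htmu.differentiable (by simp))
    (hκh.continuous.intervalIntegrable _ _)
    ((hmu.continuous_deriv (by simp)).intervalIntegrable _ _)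
    ((htmu.continuous_deriv (by simp)).intervalIntegrable _ _) hlamper hmuper htmuper
end
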